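/- Suppose 𝔓 = Ω and the traded options are the call options X_c with linear pricing functional 𝒫. Then parts (i), (ii) and (iv) of Condition C are necessary and sufficient for the absence of a robust uniformly strong arbitrage. In consequence, when (i), (ii) and (iv) hold but part (iii) of Condition C fails, there is no robust uniformly strong arbitrage but no market calibrated model exists. -/

import Mathlib

open MeasureTheory Set Filter Topology
open scoped ENNReal NNReal Classical

noncomputable section

namespace RobustFin

/-- Canonical path space: the values `S₀, S₁, …, S_n` of the asset. -/
abbrev Path (n : ℕ) := Fin (n + 1) → ℝ

/-- Paths starting at `s₀` with nonnegative coordinates: the canonical space `Ω`. -/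
def Omega (n : ℕ) (s₀ : ℝ) : Set (Path n) := {ω | ω 0 = s₀ ∧ ∀ i, 0 ≤ ω i}

/-- The first `j` coordinates `S₁, …, S_j` of a path. -/
def restr {n : ℕ} (j : Fin n) (ω : Path n) : Fin j → ℝ :=
  fun i => ω ⟨(i : ℕ) + 1, by have h1 := i.isLt; have h2 := j.isLt; omega⟩

/-- The coordinates `S₁, …, S_n` of a path. -/
def tailCoords {n : ℕ} (ω : Path n) : Fin n → ℝ := fun i => ω i.succ

/-- A dynamic trading strategy: bounded measurable positions `Δ_j(S₁,…,S_j)`. -/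
structure Dyn (n : ℕ) where
  pos : (j : Fin n) → (Fin j → ℝ) → ℝ
  meas : ∀ j, Measurable (pos j)
  bdd : ∀ j, ∃ C, ∀ x, |pos j x| ≤ C

/-- No short selling: all dynamic positions are nonnegative. -/
def Dyn.Nonneg {n : ℕ} (D : Dyn n) : Prop := ∀ j x, 0 ≤ D.pos j x

/-- Gains from dynamic trading: `Σ_j Δ_j(S₁,…,S_j)(S_{j+1} − S_j)`. -/
def Dyn.gains {n : ℕ} (D : Dyn n) (ω : Path n) : ℝ :=
  ∑ j : Fin n, D.pos j (restr j ω) * (ω j.succ - ω j.castSucc)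

/-- A static option portfolio: a constant (cash) position plus a finite linear
combination of options with maturity indices `idx` and nonnegative strikes. -/
structure Static (n : ℕ) where
  const : ℝ
  m : ℕ
  coeff : Fin m → ℝ
  idx : Fin m → Fin n
  strike : Fin m → ℝ
  strike_nonneg : ∀ k, 0 ≤ strike k

/-- Payoff of the portfolio when the options are call options. -/
def Static.callPayoff {n : ℕ} (X : Static n) (ω : Path n) : ℝ :=
  X.const + ∑ k, X.coeff k * max (ω (X.idx k).succ - X.strike k) 0

/-- Payoff of the portfolio when the options are put options. -/
def Static.putPayoff {n : ℕ} (X : Static n) (ω : Path n) : ℝ :=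
  X.const + ∑ k, X.coeff k * max (X.strike k - ω (X.idx k).succ) 0

/-- Price of a static portfolio, given the unit option prices `c i K`;
this is the (unique) linear pricing functional determined by the prices. -/
def Static.price {n : ℕ} (X : Static n) (c : Fin n → ℝ → ℝ) : ℝ :=
  X.const + ∑ k, X.coeff k * c (X.idx k) (X.strike k)

/-- Expectation of a real payoff, valued in `EReal`, with the convention
`∞ − ∞ = −∞` (in `EReal`, `⊤ - ⊤ = ⊥`). -/
def eexp {n : ℕ} (P : Measure (Path n)) (f : Path n → ℝ) : EReal :=
  ((∫⁻ ω, ENNReal.ofReal (f ω) ∂P : ℝ≥0∞) : EReal) -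
    ((∫⁻ ω, ENNReal.ofReal (-(f ω)) ∂P : ℝ≥0∞) : EReal)

/-- The positive part of an extended real number, in `ℝ≥0∞`. -/
def posE (x : EReal) : ℝ≥0∞ := if x = ⊤ then ⊤ else ENNReal.ofReal x.toReal

/-- Expectation of an `EReal`-valued payoff, with the convention `∞ − ∞ = −∞`. -/
def eexpE {n : ℕ} (P : Measure (Path n)) (f : Path n → EReal) : EReal :=
  ((∫⁻ ω, posE (f ω) ∂P : ℝ≥0∞) : EReal) - ((∫⁻ ω, posE (-(f ω)) ∂P : ℝ≥0∞) : EReal)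

/-- A market calibrated model for the market with static payoffs `pay` (calls or puts),
prices `c` and prediction set `P`. -/
def Calibrated {n : ℕ} (pay : Static n → Path n → ℝ) (c : Fin n → ℝ → ℝ)
    (P : Set (Path n)) (Q : Measure (Path n)) : Prop :=
  IsProbabilityMeasure Q ∧ Q P = 1 ∧
    ∀ (X : Static n) (D : Dyn n), D.Nonneg →
      eexp Q (fun ω => pay X ω + D.gains ω) ≤ (X.price c : EReal)

/-- A weak free lunch with vanishing risk. -/
def WFLVR {n : ℕ} (pay : Static n → Path n → ℝ) (c : Fin n → ℝ → ℝ)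
    (P : Set (Path n)) : Prop :=
  ∃ (Xs : ℕ → Static n) (Ds : ℕ → Dyn n) (X : Static n) (D : Dyn n) (L : ℝ),
    (∀ k, (Ds k).Nonneg) ∧ D.Nonneg ∧
    (∀ ω ∈ P, Tendsto (fun k => pay (Xs k) ω + (Ds k).gains ω) atTop (nhds 0)) ∧
    (∀ k, ∀ ω ∈ P, pay X ω + D.gains ω ≤ pay (Xs k) ω + (Ds k).gains ω) ∧
    Tendsto (fun k => (Xs k).price c) atTop (nhds L) ∧ L < 0

/-- A robust uniformly strong arbitrage. -/
def RobustArbitrage {n : ℕ} (pay : Static n → Path n → ℝ) (c : Fin n → ℝ → ℝ)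
    (P : Set (Path n)) : Prop :=
  ∃ (X : Static n) (D : Dyn n), D.Nonneg ∧ X.price c < 0 ∧
    ∀ ω ∈ P, 0 ≤ pay X ω + D.gains ω

/-- The superhedging price of `G` over semi-static strategies (no short selling). -/
def V {n : ℕ} (pay : Static n → Path n → ℝ) (c : Fin n → ℝ → ℝ)
    (P : Set (Path n)) (G : Path n → EReal) : EReal :=
  sInf {q : EReal | ∃ (X : Static n) (D : Dyn n), D.Nonneg ∧ q = (X.price c : EReal) ∧
    ∀ ω ∈ P, G ω ≤ ((pay X ω + D.gains ω : ℝ) : EReal)}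

/-- The superhedging price of `G` when the dynamic positions may take both signs. -/
def Vsigned {n : ℕ} (pay : Static n → Path n → ℝ) (c : Fin n → ℝ → ℝ)
    (P : Set (Path n)) (G : Path n → EReal) : EReal :=
  sInf {q : EReal | ∃ (X : Static n) (D : Dyn n), q = (X.price c : EReal) ∧
    ∀ ω ∈ P, G ω ≤ ((pay X ω + D.gains ω : ℝ) : EReal)}

/-- `Π_μ`: probability measures on the path space with marginals `δ_{s₀}, μ₁, …, μ_n`. -/
def PiMu {n : ℕ} (s₀ : ℝ) (μ : Fin n → Measure ℝ) : Set (Measure (Path n)) :=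
  {π | IsProbabilityMeasure π ∧ π (Omega n s₀) = 1 ∧
       ∀ i : Fin n, π.map (fun ω => ω i.succ) = μ i}

/-- The coordinate process is a supermartingale in its natural filtration:
for every Borel `A ⊆ ℝ₊^j`, `∫ 1_A(S₁,…,S_j)(S_{j+1} − S_j) dπ ≤ 0`. -/
def IsSupermartingaleLaw {n : ℕ} (π : Measure (Path n)) : Prop :=
  ∀ (j : Fin n) (A : Set (Fin j → ℝ)), MeasurableSet A →
    ∫ ω, Set.indicator A (fun _ => (1 : ℝ)) (restr j ω) * (ω j.succ - ω j.castSucc) ∂π ≤ 0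

/-- `M⁻_μ`: calibrated supermartingale measures. -/
def MSet {n : ℕ} (s₀ : ℝ) (μ : Fin n → Measure ℝ) : Set (Measure (Path n)) :=
  {π ∈ PiMu s₀ μ | IsSupermartingaleLaw π}

/-- `M⁻_{μ,𝔓}`: calibrated supermartingale measures giving full mass to `P`. -/
def MSetP {n : ℕ} (s₀ : ℝ) (μ : Fin n → Measure ℝ) (P : Set (Path n)) :
    Set (Measure (Path n)) :=
  {π ∈ MSet s₀ μ | π P = 1}

/-- Assumption A on the marginals. -/
def AssumptionA {n : ℕ} (s₀ : ℝ) (μ : Fin n → Measure ℝ) : Prop :=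
  (∀ i, ∫ x, x ∂(μ i) ≤ s₀) ∧
  (∀ i j : Fin n, i ≤ j → ∫ x, x ∂(μ j) ≤ ∫ x, x ∂(μ i)) ∧
  (∀ φ : ℝ → ℝ, ConcaveOn ℝ Set.univ φ → Monotone φ → (∀ x, 0 ≤ φ x) →
    ∀ i j : Fin n, i ≤ j → ∫ x, φ x ∂(μ j) ≤ ∫ x, φ x ∂(μ i))

/-- Condition C (i): each `c_i` is nonnegative, convex and nonincreasing on `ℝ₊`. -/
def CondC1 {n : ℕ} (c : Fin n → ℝ → ℝ) : Prop :=
  ∀ i, (∀ x, 0 ≤ x → 0 ≤ c i x) ∧ ConvexOn ℝ (Set.Ici 0) (c i) ∧ AntitoneOn (c i) (Set.Ici 0)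

/-- Condition C (ii): `s₀ ≥ c₁(0) ≥ … ≥ c_n(0) ≥ 0` and `c_i'(0+) ≥ −1`
(the latter expressed, for convex `c_i`, through the slopes at `0`). -/
def CondC2 {n : ℕ} (s₀ : ℝ) (c : Fin n → ℝ → ℝ) : Prop :=
  (∀ i, c i 0 ≤ s₀) ∧ (∀ i j : Fin n, i ≤ j → c j 0 ≤ c i 0) ∧ (∀ i, 0 ≤ c i 0) ∧
    (∀ i, ∀ K : ℝ, 0 < K → c i 0 - K ≤ c i K)

/-- Condition C (iii): `c_i(K) → 0` as `K → ∞`. -/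
def CondC3 {n : ℕ} (c : Fin n → ℝ → ℝ) : Prop :=
  ∀ i, Tendsto (c i) atTop (nhds 0)

/-- Condition C (iv): for every `x ≥ 0`, `c_i(0) − c_i(x)` is nonincreasing in `i`. -/
def CondC4 {n : ℕ} (c : Fin n → ℝ → ℝ) : Prop :=
  ∀ x : ℝ, 0 ≤ x → ∀ i j : Fin n, i ≤ j → c j 0 - c j x ≤ c i 0 - c i x

/-- Condition C. -/
def CondC {n : ℕ} (s₀ : ℝ) (c : Fin n → ℝ → ℝ) : Prop :=
  CondC1 c ∧ CondC2 s₀ c ∧ CondC3 c ∧ CondC4 c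

/-- Condition P (i). -/
def CondP1 {n : ℕ} (p : Fin n → ℝ → ℝ) : Prop :=
  ∀ i, (∀ x, 0 ≤ x → 0 ≤ p i x) ∧ ConvexOn ℝ (Set.Ici 0) (p i) ∧ MonotoneOn (p i) (Set.Ici 0)

/-- Condition P (ii): `s₀ ≥ lim (x − p₁(x)) ≥ … ≥ 0` and `0 ≤ p_i'(0+) ≤ 1`. -/
def CondP2 {n : ℕ} (s₀ : ℝ) (p : Fin n → ℝ → ℝ) : Prop :=
  (∃ L : Fin n → ℝ,
    (∀ i, Tendsto (fun x => x - p i x) atTop (nhds (L i))) ∧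
    (∀ i, L i ≤ s₀) ∧ (∀ i j : Fin n, i ≤ j → L j ≤ L i) ∧ (∀ i, 0 ≤ L i)) ∧
  (∃ d : Fin n → ℝ,
    (∀ i, Tendsto (fun K => (p i K - p i 0) / K) (nhdsWithin 0 (Set.Ioi 0)) (nhds (d i))) ∧
    (∀ i, 0 ≤ d i ∧ d i ≤ 1))

/-- Condition P (iii): `p_i(K) → 0` as `K → 0` (within `ℝ₊`). -/
def CondP3 {n : ℕ} (p : Fin n → ℝ → ℝ) : Prop :=
  ∀ i, Tendsto (p i) (nhdsWithin 0 (Set.Ici 0)) (nhds 0)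

/-- Condition P (iv): `p_i(x)` is nondecreasing in `i`. -/
def CondP4 {n : ℕ} (p : Fin n → ℝ → ℝ) : Prop :=
  ∀ x : ℝ, 0 ≤ x → ∀ i j : Fin n, i ≤ j → p i x ≤ p j x

/-- Condition P. -/
def CondP {n : ℕ} (s₀ : ℝ) (p : Fin n → ℝ → ℝ) : Prop :=
  CondP1 p ∧ CondP2 s₀ p ∧ CondP3 p ∧ CondP4 p

/-- The measures `μ_i` defined from the put prices by `μ_i([0,K]) = p_i'(K)`;
equivalently, `p_i(K) = ∫ (K − x)⁺ μ_i(dx)`. -/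
def PutPricesFrom {n : ℕ} (p : Fin n → ℝ → ℝ) (μ : Fin n → Measure ℝ) : Prop :=
  (∀ i, IsProbabilityMeasure (μ i)) ∧ (∀ i, μ i (Set.Iio 0) = 0) ∧
  (∀ i, Integrable (fun x => x) (μ i)) ∧
  (∀ i, ∀ K : ℝ, 0 ≤ K → p i K = ∫ x, max (K - x) 0 ∂(μ i))

/-- The path `(s₀, s₁, …, s_i, x, s_{i+2}, …, s_n)`. -/
def mkPath {n : ℕ} (s₀ : ℝ) (i : Fin n) (s : Fin i → ℝ) (x : ℝ)
    (t : Fin (n - ((i : ℕ) + 1)) → ℝ) : Path n := fun j =>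
  if h0 : (j : ℕ) = 0 then s₀
  else if h1 : (j : ℕ) ≤ (i : ℕ) then
    s ⟨(j : ℕ) - 1, by have := j.isLt; have := i.isLt; omega⟩
  else if h2 : (j : ℕ) = (i : ℕ) + 1 then x
  else t ⟨(j : ℕ) - (i : ℕ) - 2, by have := j.isLt; have := i.isLt; omega⟩

/-- The family `β_i : ℝ₊^i → ℝ` defined recursively by `β_n = 0` and
`β_i(s₁,…,s_i) = (sup_{s_{i+2},…,s_n} limsup_{x→∞} ((β_{i+1}(s₁,…,s_i,x)
 + G(s₁,…,s_i,x,s_{i+2},…,s_n)/x)·1_𝔓)) ∨ 0`. -/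
def IsBetaFamily {n : ℕ} (s₀ : ℝ) (P : Set (Path n)) (G : (Fin n → ℝ) → EReal)
    (β : (i : Fin (n + 1)) → (Fin i → ℝ) → ℝ) : Prop :=
  (∀ s, β (Fin.last n) s = 0) ∧
  ∀ (i : Fin n) (s : Fin i → ℝ), (∀ k, 0 ≤ s k) →
    (β ⟨(i : ℕ), by have := i.isLt; omega⟩ s : EReal) =
      max 0 (⨆ (t : Fin (n - ((i : ℕ) + 1)) → ℝ) (_ : ∀ k, 0 ≤ t k),
        Filter.limsup (fun x : ℝ =>
          if mkPath s₀ i s x t ∈ P then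
            ((β ⟨(i : ℕ) + 1, by have := i.isLt; omega⟩ (Fin.snoc s x) : ℝ) : EReal)
              + G (tailCoords (mkPath s₀ i s x t)) * ((x⁻¹ : ℝ) : EReal)
          else 0) Filter.atTop)

/-- Gains of the dynamic strategy `(β_i)`: `β₀(S₁ − s₀) + Σ_i β_i(S₁,…,S_i)(S_{i+1} − S_i)`. -/
def gainsOf {n : ℕ} (β : (i : Fin (n + 1)) → (Fin i → ℝ) → ℝ) (ω : Path n) : ℝ :=
  ∑ j : Fin n, β ⟨(j : ℕ), by have := j.isLt; omega⟩ (restr j ω) * (ω j.succ - ω j.castSucc)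

/-- The penalty function `λ_𝔓(s₁,…,s_n) = (1 + s₁ + … + s_n)·1{(s₁,…,s_n) ∉ 𝔓}`. -/
def lambdaP {n : ℕ} (P : Set (Path n)) (ω : Path n) : ℝ :=
  if ω ∈ P then 0 else 1 + ∑ i : Fin n, ω i.succ

/-- `min(s₀, s₁, …, s_m)`. -/
def pmin {m : ℕ} (s₀ : ℝ) (s : Fin m → ℝ) : ℝ :=
  Finset.univ.inf' Finset.univ_nonempty
    (fun j : Fin (m + 1) =>
      if h : (j : ℕ) = 0 then s₀ else s ⟨(j : ℕ) - 1, by have := j.isLt; omega⟩)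

/-- `max(s₀, s₁, …, s_m)`. -/
def pmax {m : ℕ} (s₀ : ℝ) (s : Fin m → ℝ) : ℝ :=
  Finset.univ.sup' Finset.univ_nonempty
    (fun j : Fin (m + 1) =>
      if h : (j : ℕ) = 0 then s₀ else s ⟨(j : ℕ) - 1, by have := j.isLt; omega⟩)

/-!
A superhedge is unwound from the last maturity backwards. Over the last period, a nonnegative
position in the asset can replace the payoff of the last calls by no more than its largest
nonincreasing convex minorant. On the strikes involved, this envelope is itself the payoff of a
portfolio of cash and calls, which costs no more than the original one by the convexity of prices in
the strike, and by (iv) still no more when bought one maturity earlier. At time zero only the sure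
value `s₀` is left. Prices that do not vanish at large strikes cannot break this argument, because
finitely many call prices are those of a law with some mass lost at infinity, where the payoff of a
superhedge has nonnegative slope.

Conversely, a violation of (i), (ii) or (iv) is a portfolio of negative price with an explicit
superhedge. In a calibrated model `c_i(K) = 𝔼 (S_i - K)⁺`, which tends to `0` by dominated
convergence.
-/

/-- The pairing `∑ₖ w k * φ k` of finitely supported weights with a function. With `w` a portfolio
of calls indexed by strike, it is the price of the portfolio under the price function `φ`, and, for
`φ = call s`, its payoff at `s`; with `w` a law on `ℝ₊`, it is the expectation of `φ`. -/
def weightedSum : (ℝ →₀ ℝ) →ₗ[ℝ] (ℝ → ℝ) →ₗ[ℝ] ℝ :=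
  Finsupp.linearCombination ℝ fun k ↦ LinearMap.proj k

/-- The payoff `(s - K)⁺` of a call. As a function of `K`, `call s` is the call price function of an
asset worth `s` for sure. -/
def call (s K : ℝ) : ℝ := max (s - K) 0

section WeightedSum

variable {w : ℝ →₀ ℝ} {φ ψ : ℝ → ℝ}

lemma weightedSum_apply (w : ℝ →₀ ℝ) (φ : ℝ → ℝ) :
    weightedSum w φ = ∑ k ∈ w.support, w k * φ k := by
  simp [weightedSum, Finsupp.linearCombination_apply, Finsupp.sum]

@[simp]
lemma weightedSum_single (k r : ℝ) (φ : ℝ → ℝ) :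
    weightedSum (Finsupp.single k r) φ = r * φ k := by
  simp [weightedSum]

lemma weightedSum_congr (h : ∀ k ∈ w.support, φ k = ψ k) : weightedSum w φ = weightedSum w ψ := by
  simp only [weightedSum_apply]
  exact Finset.sum_congr rfl fun k hk ↦ by rw [h k hk]

lemma weightedSum_nonneg (hw : 0 ≤ w) (h : ∀ k ∈ w.support, 0 ≤ φ k) : 0 ≤ weightedSum w φ := by
  rw [weightedSum_apply]
  exact Finset.sum_nonneg fun k hk ↦ mul_nonneg (hw k) (h k hk)

lemma weightedSum_const (w : ℝ →₀ ℝ) (a : ℝ) : weightedSum w (fun _ ↦ a) = a * weightedSum w 1 := by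
  rw [← smul_eq_mul, ← map_smul]
  congr 1
  ext
  simp

lemma weightedSum_comm (b w : ℝ →₀ ℝ) (F : ℝ → ℝ → ℝ) :
    weightedSum b (fun k ↦ weightedSum w (F · k)) = weightedSum w fun x ↦ weightedSum b (F x) := by
  simp only [weightedSum_apply, Finset.mul_sum]
  rw [Finset.sum_comm]
  exact Finset.sum_congr rfl fun x _ ↦ Finset.sum_congr rfl fun k _ ↦ mul_left_comm _ _ _

end WeightedSum

section Call

lemma call_nonneg (s K : ℝ) : 0 ≤ call s K := le_max_right _ _

lemma sub_le_call (s K : ℝ) : s - K ≤ call s K := le_max_left _ _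

lemma call_of_le {s K : ℝ} (h : K ≤ s) : call s K = s - K := max_eq_left (sub_nonneg.2 h)

lemma call_of_ge {s K : ℝ} (h : s ≤ K) : call s K = 0 := max_eq_right (sub_nonpos.2 h)

lemma call_zero_right {s : ℝ} (hs : 0 ≤ s) : call s 0 = s := by
  rw [call_of_le hs, sub_zero]

lemma antitone_call (s : ℝ) : Antitone (call s) :=
  fun _ _ h ↦ max_le_max (sub_le_sub_left h s) le_rfl

lemma convexOn_call (s : ℝ) : ConvexOn ℝ univ (call s) :=
  ((convexOn_const s convex_univ).sub (concaveOn_id convex_univ)).sup (convexOn_const 0 convex_univ)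

lemma put_call_parity (s K : ℝ) : call s K = call K s + s - K := by
  rcases le_total s K with h | h
  · rw [call_of_ge h, call_of_le h]
    ring
  · rw [call_of_le h, call_of_ge h]
    ring

lemma weightedSum_call_of_le {w : ℝ →₀ ℝ} {y : ℝ} (h : ∀ x ∈ w.support, y ≤ x) :
    weightedSum w (call · y) = weightedSum w id - y * weightedSum w 1 := by
  rw [← weightedSum_const, ← map_sub]
  exact weightedSum_congr fun x hx ↦ call_of_le (h x hx)

lemma weightedSum_put_call_parity (w : ℝ →₀ ℝ) (K : ℝ) :
    weightedSum w (call · K) = weightedSum w (call K) + weightedSum w id - K * weightedSum w 1 := by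
  rw [← weightedSum_const, ← map_add, ← map_sub]
  exact weightedSum_congr fun x _ ↦ put_call_parity x K

lemma tendsto_call_div_atTop (K : ℝ) : Tendsto (fun s ↦ call s K / s) atTop (𝓝 1) := by
  have hlim : Tendsto (fun s : ℝ ↦ 1 - K / s) atTop (𝓝 1) := by
    simpa using (tendsto_const_nhds (x := (1 : ℝ))).sub (tendsto_id.const_div_atTop K)
  refine hlim.congr' ?_
  filter_upwards [eventually_ge_atTop K, eventually_gt_atTop 0] with s hK hs
  rw [call_of_le hK, sub_div, div_self (ne_of_gt hs)]

/-- `weightedSum b 1` is the slope at infinity of the payoff of the portfolio `b`. -/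
lemma weightedSum_one_nonneg_of_payoff_nonneg {a : ℝ} {b : ℝ →₀ ℝ}
    (h : ∀ s, 0 ≤ s → 0 ≤ a + weightedSum b (call s)) : 0 ≤ weightedSum b 1 := by
  have hlim : Tendsto (fun s ↦ a / s + ∑ k ∈ b.support, b k * (call s k / s)) atTop
      (𝓝 (0 + ∑ k ∈ b.support, b k * 1)) :=
    (tendsto_id.const_div_atTop a).add
      (tendsto_finsetSum _ fun k _ ↦ (tendsto_call_div_atTop k).const_mul (b k))
  rw [zero_add] at hlim
  rw [weightedSum_apply]
  refine ge_of_tendsto hlim ?_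
  filter_upwards [eventually_ge_atTop 0] with s hs
  have hquot := div_nonneg (h s hs) hs
  simpa only [weightedSum_apply, add_div, Finset.sum_div, mul_div_assoc] using hquot

end Call

section Interpolation

lemma le_of_convexOn_of_eq_affine {S : Set ℝ} {g : ℝ → ℝ} (hconv : ConvexOn ℝ S g) {y a m P W : ℝ}
    (hyS : y ∈ S) (hmS : m ∈ S) (hya : y ≤ a) (ham : a < m) (hga : g a = P - a * W)
    (hgm : g m = P - m * W) : P - y * W ≤ g y := by
  rcases hya.eq_or_lt with rfl | hya
  · exact hga.ge
  · have hslope := hconv.slope_mono_adjacent hyS hmS hya ham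
    have hright : (g m - g a) / (m - a) = -W := by
      rw [div_eq_iff (sub_pos.2 ham).ne', hga, hgm]
      ring
    rw [hright, div_le_iff₀ (sub_pos.2 hya)] at hslope
    linarith

/-- `y ↦ C + ∑ₓ w x * (x - y)⁺` interpolates `g` at the nodes `T`, with nonnegative weights on `T`,
and stays below `g` to the left of all nodes. -/
structure IsPutInterpolant (S : Set ℝ) (g : ℝ → ℝ) (T : Finset ℝ) (C : ℝ) (w : ℝ →₀ ℝ) : Prop where
  nonneg : 0 ≤ w
  mem_supported : w ∈ Finsupp.supported ℝ ℝ (T : Set ℝ)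
  eq_of_mem : ∀ k ∈ T, g k = C + weightedSum w (call · k)
  le_of_forall_le : ∀ y ∈ S, (∀ x ∈ T, y ≤ x) → C + weightedSum w (call · y) ≤ g y

/-- The weight added at `m` is nonnegative because the interpolant lies below `g` at `a`. -/
lemma IsPutInterpolant.exists_insert {S : Set ℝ} {g : ℝ → ℝ} (hconv : ConvexOn ℝ S g)
    {T : Finset ℝ} {C : ℝ} {w : ℝ →₀ ℝ} (h : IsPutInterpolant S g T C w) {a m : ℝ} (haS : a ∈ S)
    (hmS : m ∈ S) (hm : IsLeast T m) (ham : a < m) :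
    ∃ e, IsPutInterpolant S g (insert a T) C (w + Finsupp.single m e) := by
  set e := (g a - (C + weightedSum w (call · a))) / (m - a)
  have hle : ∀ x ∈ T, m ≤ x := fun x hx ↦ hm.2 hx
  have he : 0 ≤ e :=
    div_nonneg (sub_nonneg.2 (h.le_of_forall_le a haS fun x hx ↦ ham.le.trans (hle x hx)))
      (sub_pos.2 ham).le
  have hmulE : e * (m - a) = g a - (C + weightedSum w (call · a)) :=
    div_mul_cancel₀ _ (sub_pos.2 ham).ne'
  set w' := w + Finsupp.single m e
  have hsum : ∀ y, weightedSum w' (call · y) = weightedSum w (call · y) + e * call m y :=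
    fun y ↦ by simp [w']
  have hw'T : w' ∈ Finsupp.supported ℝ ℝ (T : Set ℝ) :=
    add_mem h.mem_supported (Finsupp.single_mem_supported ℝ e hm.1)
  have heqT : ∀ k ∈ T, g k = C + weightedSum w' (call · k) := fun k hk ↦ by
    rw [hsum, call_of_ge (hle k hk), mul_zero, add_zero, h.eq_of_mem k hk]
  have heqa : g a = C + weightedSum w' (call · a) := by
    rw [hsum, call_of_le ham.le, hmulE]
    ring
  have haffine : ∀ z ≤ m, C + weightedSum w' (call · z)
      = C + weightedSum w' id - z * weightedSum w' 1 := fun z hz ↦ by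
    rw [weightedSum_call_of_le fun x hx ↦ hz.trans (hle x (hw'T hx)), add_sub_assoc]
  refine ⟨e, add_nonneg h.nonneg (Finsupp.single_nonneg.2 he),
    Finsupp.supported_mono (by simp) hw'T, ?_, fun y hyS hy ↦ ?_⟩
  · simpa only [Finset.forall_mem_insert] using ⟨heqa, heqT⟩
  · have hya : y ≤ a := hy a (by simp)
    rw [haffine y (hya.trans ham.le)]
    exact le_of_convexOn_of_eq_affine hconv hyS hmS hya ham
      (heqa.trans (haffine a ham.le)) ((heqT m hm.1).trans (haffine m le_rfl))

/-- The interpolant is built from the largest node downwards: a new smallest node only adds weight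
at the previous smallest node. -/
lemma exists_isPutInterpolant {S : Set ℝ} {g : ℝ → ℝ} (hconv : ConvexOn ℝ S g)
    (hanti : AntitoneOn g S) (T : Finset ℝ) (hTS : ↑T ⊆ S) (hT : T.Nonempty) :
    ∃ C ∈ g '' T, ∃ w, IsPutInterpolant S g T C w := by
  induction T using Finset.induction_on_min with
  | empty => simp at hT
  | insert a T haT ih =>
    have haS : a ∈ S := hTS (by simp)
    rcases T.eq_empty_or_nonempty with rfl | hne
    · refine ⟨g a, ⟨a, by simp⟩, 0, le_rfl, zero_mem _, by simp, fun y hy hya ↦ ?_⟩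
      simpa using hanti hy haS (hya a (by simp))
    · have hTS' : ↑T ⊆ S := fun x hx ↦ hTS (Finset.mem_insert_of_mem hx)
      obtain ⟨C, hC, w, hw⟩ := ih hTS' hne
      have hmT := T.min'_mem hne
      obtain ⟨e, he⟩ := hw.exists_insert hconv haS (hTS' hmT) (T.isLeast_min' hne) (haT _ hmT)
      exact ⟨C, image_mono (by simp) hC, _, he⟩

/-- In terms of calls, the interpolant of a convex function has nonnegative positions at all strikes
but `0`, where the position is the slope of the interpolant at `0`. -/
lemma exists_call_interpolation {g : ℝ → ℝ} {σ : ℝ} (hconv : ConvexOn ℝ (Ici 0) g)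
    (hanti : AntitoneOn (fun x ↦ g x - σ * x) (Ici 0)) (T : Finset ℝ) (hT : ↑T ⊆ Ici (0 : ℝ))
    (h0 : 0 ∈ T) :
    ∃ (C : ℝ) (β : ℝ →₀ ℝ), β ∈ Finsupp.supported ℝ ℝ T ∧ (∀ k ≠ 0, 0 ≤ β k) ∧
      weightedSum β 1 = σ ∧ ∀ x ∈ T, C + weightedSum β (call x) = g x := by
  have hconv' : ConvexOn ℝ (Ici 0) fun x ↦ g x - σ * x :=
    hconv.sub ((LinearMap.mul ℝ ℝ σ).concaveOn (convex_Ici 0))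
  obtain ⟨C, -, w, hw, hwT, hrep, -⟩ := exists_isPutInterpolant hconv' hanti T hT ⟨0, h0⟩
  refine ⟨C + weightedSum w id, w + Finsupp.single 0 (σ - weightedSum w 1),
    add_mem hwT (Finsupp.single_mem_supported ℝ _ h0), fun k hk ↦ ?_, by simp, fun x hx ↦ ?_⟩
  · simpa [Finsupp.single_eq_of_ne hk] using hw k
  · have hparity := weightedSum_put_call_parity w x
    simp only [map_add, LinearMap.add_apply, weightedSum_single, call_zero_right (hT hx)]
    linarith [hrep x hx]

end Interpolation

section CallPrice

/-- The conditions on the price of calls of a single maturity, as a function of the strike, that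
exclude arbitrage by trading in these calls alone. -/
structure IsCallPrice (c : ℝ → ℝ) : Prop where
  nonneg : ∀ K, 0 ≤ K → 0 ≤ c K
  convexOn : ConvexOn ℝ (Ici 0) c
  antitoneOn : AntitoneOn c (Ici 0)
  sub_le : ∀ K, 0 < K → c 0 - K ≤ c K

lemma isCallPrice_call (s : ℝ) : IsCallPrice (call s) where
  nonneg K _ := call_nonneg s K
  convexOn := (convexOn_call s).subset (subset_univ _) (convex_Ici 0)
  antitoneOn := (antitone_call s).antitoneOn _
  sub_le K hK := by
    rw [sub_le_iff_le_add]
    exact max_le (by linarith [sub_le_call s K]) (by linarith [call_nonneg s K])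

lemma IsCallPrice.weightedSum_one_le_one {c : ℝ → ℝ} (hc : IsCallPrice c) {T : Finset ℝ}
    (h0 : 0 ∈ T) {C : ℝ} {w : ℝ →₀ ℝ} (hwT : ∀ x ∈ w.support, x ∈ T ∧ 0 < x)
    (hrep : ∀ k ∈ T, c k = C + weightedSum w (call · k)) : weightedSum w 1 ≤ 1 := by
  rcases w.support.eq_empty_or_nonempty with hempty | hne
  · simp [Finsupp.support_eq_empty.1 hempty]
  · set u := w.support.min' hne
    obtain ⟨huT, hu⟩ := hwT u (w.support.min'_mem hne)
    have hc0 := hrep 0 h0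
    have hcu := hrep u huT
    rw [weightedSum_call_of_le fun x hx ↦ (hwT x hx).2.le] at hc0
    rw [weightedSum_call_of_le w.support.min'_le] at hcu
    have := hc.sub_le u hu
    exact le_of_mul_le_mul_left (by linarith) hu

/-- The constant `C` is the price of the mass that the law has lost at infinity. -/
lemma IsCallPrice.exists_law {c : ℝ → ℝ} (hc : IsCallPrice c) (T : Finset ℝ)
    (hT : ↑T ⊆ Ici (0 : ℝ)) (h0 : 0 ∈ T) :
    ∃ (C : ℝ) (w : ℝ →₀ ℝ), 0 ≤ C ∧ 0 ≤ w ∧ w ∈ Finsupp.supported ℝ ℝ T ∧ weightedSum w 1 = 1 ∧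
      ∀ k ∈ T, c k = C + weightedSum w (call · k) := by
  obtain ⟨_, ⟨t, ht, rfl⟩, w, hw, hwT, hrep, -⟩ :=
    exists_isPutInterpolant hc.convexOn hc.antitoneOn T hT ⟨0, h0⟩
  have hcall0 : ∀ k ∈ T, call 0 k = 0 := fun k hk ↦ call_of_ge (hT hk)
  set v := w.erase 0
  have hvT : ∀ x ∈ v.support, x ∈ T ∧ 0 < x := fun x hx ↦ by
    obtain ⟨hx0, hxw⟩ : x ≠ 0 ∧ x ∈ w.support := by simpa [v] using hx
    exact ⟨hwT hxw, lt_of_le_of_ne (hT (hwT hxw)) hx0.symm⟩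
  have hvrep : ∀ k ∈ T, c k = c t + weightedSum v (call · k) := fun k hk ↦ by
    rw [hrep k hk, ← Finsupp.single_add_erase 0 w]
    simp [hcall0 k hk, v]
  have hv1 : weightedSum v 1 ≤ 1 := hc.weightedSum_one_le_one h0 hvT hvrep
  have hv : 0 ≤ v := fun x ↦ by
    by_cases hx : x = 0
    · simp [v, hx]
    · simpa [v, Finsupp.erase_ne hx] using hw x
  refine ⟨c t, v + Finsupp.single 0 (1 - weightedSum v 1), hc.nonneg t (hT ht),
    add_nonneg hv (Finsupp.single_nonneg.2 (sub_nonneg.2 hv1)),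
    add_mem (fun x hx ↦ (hvT x hx).1) (Finsupp.single_mem_supported ℝ _ h0), by simp,
    fun k hk ↦ ?_⟩
  simp [hcall0 k hk, hvrep k hk]

lemma IsCallPrice.value_nonneg_of_grid {c : ℝ → ℝ} (hc : IsCallPrice c) {T : Finset ℝ}
    (hT : ↑T ⊆ Ici (0 : ℝ)) (h0 : 0 ∈ T) {a : ℝ} {b : ℝ →₀ ℝ} (hbT : b ∈ Finsupp.supported ℝ ℝ T)
    (hslope : 0 ≤ weightedSum b 1) (hpay : ∀ x ∈ T, 0 ≤ a + weightedSum b (call x)) :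
    0 ≤ a + weightedSum b c := by
  obtain ⟨C, w, hC, hw, hwT, hw1, hrep⟩ := hc.exists_law T hT h0
  have hprice : weightedSum b c
      = C * weightedSum b 1 + weightedSum w fun x ↦ weightedSum b (call x) := by
    rw [← weightedSum_const, ← weightedSum_comm, ← map_add]
    exact weightedSum_congr fun k hk ↦ hrep k (hbT hk)
  have hmean : a + weightedSum b c
      = C * weightedSum b 1 + weightedSum w fun x ↦ a + weightedSum b (call x) := by
    have hsplit : (fun x ↦ a + weightedSum b (call x))
        = (fun _ ↦ a) + fun x ↦ weightedSum b (call x) := rfl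
    rw [hsplit, map_add, weightedSum_const, hw1, hprice]
    ring
  rw [hmean]
  exact add_nonneg (mul_nonneg hC hslope) (weightedSum_nonneg hw fun x hx ↦ hpay x (hwT hx))

end CallPrice

section Envelope

variable {f : ℝ → ℝ} {p : ℝ × ℝ} {σ x : ℝ}

/-- The nonincreasing affine minorants of `f` on `ℝ₊`, where `(α, δ)` encodes `x ↦ α - δ * x`. -/
def antitoneAffineMinorants (f : ℝ → ℝ) : Set (ℝ × ℝ) :=
  {p | 0 ≤ p.2 ∧ ∀ x, 0 ≤ x → p.1 - p.2 * x ≤ f x}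

/-- The largest nonincreasing convex function below `f` on `ℝ₊`. It is meaningful only if `f` has a
nonincreasing affine minorant, since the supremum of the empty family is `0`. -/
def antitoneConvexEnvelope (f : ℝ → ℝ) (x : ℝ) : ℝ :=
  ⨆ p : antitoneAffineMinorants f, (p.1.1 - p.1.2 * x)

lemma le_antitoneConvexEnvelope (hp : p ∈ antitoneAffineMinorants f) (hx : 0 ≤ x) :
    p.1 - p.2 * x ≤ antitoneConvexEnvelope f x :=
  le_ciSup (f := fun p : antitoneAffineMinorants f ↦ p.1.1 - p.1.2 * x)
    ⟨f x, forall_mem_range.2 fun q ↦ q.2.2 x hx⟩ ⟨p, hp⟩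

lemma antitoneConvexEnvelope_le_iff (hf : (antitoneAffineMinorants f).Nonempty) (hx : 0 ≤ x)
    {r : ℝ} :
    antitoneConvexEnvelope f x ≤ r ↔ ∀ p ∈ antitoneAffineMinorants f, p.1 - p.2 * x ≤ r := by
  have := hf.to_subtype
  exact ⟨fun h p hp ↦ (le_antitoneConvexEnvelope hp hx).trans h, fun h ↦ ciSup_le fun p ↦ h p p.2⟩

lemma antitoneConvexEnvelope_le (hf : (antitoneAffineMinorants f).Nonempty) (hx : 0 ≤ x) :
    antitoneConvexEnvelope f x ≤ f x :=
  (antitoneConvexEnvelope_le_iff hf hx).2 fun _ hp ↦ hp.2 x hx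

lemma convexOn_antitoneConvexEnvelope (hf : (antitoneAffineMinorants f).Nonempty) :
    ConvexOn ℝ (Ici 0) (antitoneConvexEnvelope f) := by
  refine ⟨convex_Ici 0, fun x hx y hy a b ha hb hab ↦ ?_⟩
  refine (antitoneConvexEnvelope_le_iff hf (convex_Ici 0 hx hy ha hb hab)).2 fun p hp ↦ ?_
  calc p.1 - p.2 * (a • x + b • y)
      = a * (p.1 - p.2 * x) + b * (p.1 - p.2 * y) := by
        simp only [smul_eq_mul]
        linear_combination -p.1 * hab
    _ ≤ a • antitoneConvexEnvelope f x + b • antitoneConvexEnvelope f y :=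
        add_le_add (mul_le_mul_of_nonneg_left (le_antitoneConvexEnvelope hp hx) ha)
          (mul_le_mul_of_nonneg_left (le_antitoneConvexEnvelope hp hy) hb)

lemma antitoneOn_antitoneConvexEnvelope_sub (hf : (antitoneAffineMinorants f).Nonempty)
    (hσ : ∀ p ∈ antitoneAffineMinorants f, -p.2 ≤ σ) :
    AntitoneOn (fun x ↦ antitoneConvexEnvelope f x - σ * x) (Ici 0) := by
  intro x hx y hy hxy
  suffices h : antitoneConvexEnvelope f y ≤ antitoneConvexEnvelope f x + σ * (y - x) by
    linarith
  refine (antitoneConvexEnvelope_le_iff hf hy).2 fun p hp ↦ ?_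
  linarith [le_antitoneConvexEnvelope hp hx,
    mul_le_mul_of_nonneg_right (hσ p hp) (sub_nonneg.2 hxy)]

/-- The superhedging of a portfolio of calls `b` over one period: `C + ∑ β k (x - k)⁺` is the
envelope of the payoff at the strikes of `b`. Its slope at infinity `σ` is at most `0` because it is
nonincreasing, and at most that of `b` because it lies below the payoff. -/
lemma exists_call_envelope {b : ℝ →₀ ℝ} (hb : b ∈ Finsupp.supported ℝ ℝ (Ici 0))
    (hne : (antitoneAffineMinorants fun y ↦ weightedSum b (call y)).Nonempty) :
    ∃ (C : ℝ) (β : ℝ →₀ ℝ), β ∈ Finsupp.supported ℝ ℝ (Ici 0) ∧ (∀ k ≠ 0, 0 ≤ β k) ∧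
      weightedSum β 1 ≤ 0 ∧
      (∀ c, IsCallPrice c → C + weightedSum β c ≤ weightedSum b c) ∧
      ∀ p ∈ antitoneAffineMinorants fun y ↦ weightedSum b (call y),
        ∀ x, 0 ≤ x → p.1 - p.2 * x ≤ C + weightedSum β (call x) := by
  set f := fun y ↦ weightedSum b (call y)
  set T := insert 0 b.support
  have h0 : 0 ∈ T := Finset.mem_insert_self _ _
  have hT : ↑T ⊆ Ici (0 : ℝ) := by
    simpa [T, insert_subset_iff] using (Finsupp.mem_supported ℝ b).1 hb
  have hbT : b ∈ Finsupp.supported ℝ ℝ (T : Set ℝ) := fun k hk ↦ Finset.mem_insert_of_mem hk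
  set σ := min 0 (weightedSum b 1)
  have hσ : ∀ p ∈ antitoneAffineMinorants f, -p.2 ≤ σ := fun p hp ↦ by
    refine le_min (neg_nonpos.2 hp.1) ?_
    have hslope : 0 ≤ weightedSum (b + Finsupp.single 0 p.2) 1 :=
      weightedSum_one_nonneg_of_payoff_nonneg (a := -p.1) fun s hs ↦ by
        simp only [map_add, LinearMap.add_apply, weightedSum_single, call_zero_right hs]
        linarith [hp.2 s hs]
    simp only [map_add, LinearMap.add_apply, weightedSum_single, Pi.one_apply] at hslope
    linarith
  obtain ⟨C, β, hβT, hβ, hβσ, hrep⟩ := exists_call_interpolation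
    (convexOn_antitoneConvexEnvelope hne) (antitoneOn_antitoneConvexEnvelope_sub hne hσ) T hT h0
  refine ⟨C, β, Finsupp.supported_mono hT hβT, hβ, hβσ.trans_le (min_le_left _ _),
    fun c hc ↦ ?_, fun p hp x hx ↦ ?_⟩
  · have hvalue : 0 ≤ -C + weightedSum (b - β) c := by
      refine hc.value_nonneg_of_grid hT h0 (sub_mem hbT hβT) ?_ fun x hx ↦ ?_
      · simp [hβσ, σ]
      · simp only [map_sub, LinearMap.sub_apply]
        linarith [hrep x hx, antitoneConvexEnvelope_le hne (hT hx)]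
    simp only [map_sub, LinearMap.sub_apply] at hvalue
    linarith
  · have hvalue : 0 ≤ (C - p.1) + weightedSum (β + Finsupp.single 0 p.2) (call x) := by
      refine (isCallPrice_call x).value_nonneg_of_grid hT h0
        (add_mem hβT (Finsupp.single_mem_supported ℝ _ h0)) ?_ fun y hy ↦ ?_
      · simpa [hβσ] using neg_le_iff_add_nonneg.1 (hσ p hp)
      · simp only [map_add, LinearMap.add_apply, weightedSum_single, call_zero_right (hT hy)]
        linarith [hrep y hy, le_antitoneConvexEnvelope hp (hT hy)]
    simp only [map_add, LinearMap.add_apply, weightedSum_single, call_zero_right hx] at hvalue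
    linarith

end Envelope

section ConcaveOrder

/-- Domination of `c'` by `c` in the increasing concave order. For the call price functions of laws
`μ'` and `μ` on `ℝ₊` it says that `∫ φ dμ' ≤ ∫ φ dμ` for every nondecreasing concave `φ`, the
functions `min · x` being generators of that cone. -/
def ConcaveOrderLE (c' c : ℝ → ℝ) : Prop :=
  c' 0 ≤ c 0 ∧ ∀ x, 0 ≤ x → c' 0 - c' x ≤ c 0 - c x

/-- The hypotheses on `β` say that the payoff of the portfolio is convex and nonincreasing. -/
lemma ConcaveOrderLE.weightedSum_le {c' c : ℝ → ℝ} (h : ConcaveOrderLE c' c) {β : ℝ →₀ ℝ}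
    (hβ : β ∈ Finsupp.supported ℝ ℝ (Ici 0)) (hpos : ∀ k ≠ 0, 0 ≤ β k)
    (hslope : weightedSum β 1 ≤ 0) : weightedSum β c ≤ weightedSum β c' := by
  set φ : ℝ → ℝ := fun k ↦ c 0 - c k - (c' 0 - c' k)
  have hφ : 0 ≤ weightedSum β φ := by
    rw [weightedSum_apply]
    refine Finset.sum_nonneg fun k hk ↦ ?_
    by_cases hk0 : k = 0
    · simp [hk0, φ]
    · exact mul_nonneg (hpos k hk0) (sub_nonneg.2 (h.2 k (hβ hk)))
  have hsplit : c' = c + (fun _ ↦ c' 0 - c 0) + φ := by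
    funext k
    simp only [Pi.add_apply, φ]
    ring
  rw [hsplit, map_add, map_add, weightedSum_const]
  linarith [mul_nonneg_of_nonpos_of_nonpos (sub_nonpos.2 h.1) hslope]

end ConcaveOrder

section BackwardInduction

variable {n : ℕ}

/-- The strategy `D` without its position over the last period. -/
def Dyn.init (D : Dyn (n + 1)) : Dyn n where
  pos j := D.pos j.castSucc
  meas j := D.meas j.castSucc
  bdd j := D.bdd j.castSucc

lemma Dyn.Nonneg.init {D : Dyn (n + 1)} (hD : D.Nonneg) : D.init.Nonneg :=
  fun j ↦ hD j.castSucc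

lemma restr_castSucc_snoc (j : Fin n) (ω : Path n) (y : ℝ) :
    restr j.castSucc (Fin.snoc ω y : Path (n + 1)) = restr j ω := by
  funext i
  exact Fin.snoc_castSucc (α := fun _ ↦ ℝ) y ω ⟨(i : ℕ) + 1, by have : (i : ℕ) < j := i.isLt; omega⟩

lemma restr_last_snoc (ω : Path n) (y : ℝ) :
    restr (Fin.last n) (Fin.snoc ω y : Path (n + 1)) = tailCoords ω := by
  funext i
  exact Fin.snoc_castSucc (α := fun _ ↦ ℝ) y ω (Fin.succ i)

lemma Dyn.gains_snoc (D : Dyn (n + 1)) (ω : Path n) (y : ℝ) :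
    D.gains (Fin.snoc ω y : Path (n + 1))
      = D.init.gains ω + D.pos (Fin.last n) (tailCoords ω) * (y - ω (Fin.last n)) := by
  unfold Dyn.gains
  rw [Fin.sum_univ_castSucc, restr_last_snoc, Fin.succ_last, Fin.snoc_last, Fin.snoc_castSucc]
  congr 1
  refine Finset.sum_congr rfl fun j _ ↦ ?_
  rw [restr_castSucc_snoc, Fin.succ_castSucc, Fin.snoc_castSucc, Fin.snoc_castSucc]
  rfl

lemma snoc_mem_Omega {s₀ y : ℝ} {ω : Path n} (hω : ω ∈ Omega n s₀) (hy : 0 ≤ y) :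
    (Fin.snoc ω y : Path (n + 1)) ∈ Omega (n + 1) s₀ := by
  refine ⟨?_, Fin.lastCases ?_ fun i ↦ ?_⟩
  · rw [← Fin.castSucc_zero, Fin.snoc_castSucc]
    exact hω.1
  · rwa [Fin.snoc_last]
  · rw [Fin.snoc_castSucc]
    exact hω.2 i

lemma const_mem_Omega {s₀ : ℝ} (hs₀ : 0 ≤ s₀) : (fun _ ↦ s₀) ∈ Omega n s₀ :=
  ⟨rfl, fun _ ↦ hs₀⟩

lemma sum_weightedSum_piSingle (i : Fin n) (β : ℝ →₀ ℝ) (φ : Fin n → ℝ → ℝ) :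
    ∑ j, weightedSum (Pi.single (M := fun _ ↦ ℝ →₀ ℝ) i β j) (φ j) = weightedSum β (φ i) := by
  rw [Finset.sum_eq_single i (fun j _ hj ↦ by simp [hj]) (by simp), Pi.single_eq_same]

lemma piSingle_mem_supported {β : ℝ →₀ ℝ} {S : Set ℝ} (hβ : β ∈ Finsupp.supported ℝ ℝ S)
    (i j : Fin n) :
    Pi.single (M := fun _ ↦ ℝ →₀ ℝ) i β j ∈ Finsupp.supported ℝ ℝ S := by
  rw [Pi.single_apply]
  split_ifs
  exacts [hβ, zero_mem _]

/-- The payoff at the last maturity is replaced by its envelope, which hedges it over the last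
period and is a portfolio of cash and calls that can be held one maturity earlier. -/
lemma exists_one_period_reduction {s₀ : ℝ} (hs₀ : 0 ≤ s₀) {D : Dyn (n + 1)} (hD : D.Nonneg) {a : ℝ}
    {b : Fin (n + 2) → ℝ →₀ ℝ} (hb : ∀ i, b i ∈ Finsupp.supported ℝ ℝ (Ici 0))
    (hpay : ∀ ω ∈ Omega (n + 1) s₀,
      0 ≤ a + ∑ i, weightedSum (b i) (call (ω i)) + D.gains ω) :
    ∃ (a' : ℝ) (b' : Fin (n + 1) → ℝ →₀ ℝ), (∀ i, b' i ∈ Finsupp.supported ℝ ℝ (Ici 0)) ∧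
      (∀ c : Fin (n + 2) → ℝ → ℝ, IsCallPrice (c (Fin.last (n + 1))) →
        ConcaveOrderLE (c (Fin.last (n + 1))) (c (Fin.last n).castSucc) →
        a' + ∑ i, weightedSum (b' i) (c i.castSucc) ≤ a + ∑ i, weightedSum (b i) (c i)) ∧
      ∀ ω ∈ Omega n s₀, 0 ≤ a' + ∑ i, weightedSum (b' i) (call (ω i)) + D.init.gains ω := by
  set A : Path n → ℝ := fun ω ↦
    a + ∑ i : Fin (n + 1), weightedSum (b i.castSucc) (call (ω i)) + D.init.gains ω
  set δ : Path n → ℝ := fun ω ↦ D.pos (Fin.last n) (tailCoords ω)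
  have hminorant : ∀ ω ∈ Omega n s₀, (δ ω * ω (Fin.last n) - A ω, δ ω)
      ∈ antitoneAffineMinorants fun y ↦ weightedSum (b (Fin.last (n + 1))) (call y) := by
    refine fun ω hω ↦ ⟨hD _ _, fun y hy ↦ ?_⟩
    have hpath := hpay _ (snoc_mem_Omega hω hy)
    simp only [Fin.sum_univ_castSucc (n := n + 1), Fin.snoc_castSucc, Fin.snoc_last,
      D.gains_snoc] at hpath
    simp only [A, δ]
    linarith
  obtain ⟨C, β, hβ, hβpos, hβ1, hprice, hdom⟩ :=
    exists_call_envelope (hb _) ⟨_, hminorant _ (const_mem_Omega hs₀)⟩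
  refine ⟨a + C, fun i ↦ b i.castSucc + Pi.single (M := fun _ ↦ ℝ →₀ ℝ) (Fin.last n) β i,
    fun i ↦ add_mem (hb _) (piSingle_mem_supported hβ _ i), fun c hc hle ↦ ?_, fun ω hω ↦ ?_⟩
  · simp only [map_add, LinearMap.add_apply, Finset.sum_add_distrib]
    rw [sum_weightedSum_piSingle _ _ fun i ↦ c i.castSucc, Fin.sum_univ_castSucc (n := n + 1)]
    linarith [hprice _ hc, hle.weightedSum_le hβ hβpos hβ1]
  · simp only [map_add, LinearMap.add_apply, Finset.sum_add_distrib]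
    rw [sum_weightedSum_piSingle _ _ fun i ↦ call (ω i)]
    have henvelope := hdom _ (hminorant ω hω) (ω (Fin.last n)) (hω.2 _)
    simp only [A] at henvelope
    linarith

lemma value_nonneg_of_superhedge {s₀ : ℝ} (hs₀ : 0 ≤ s₀) {D : Dyn n} (hD : D.Nonneg) {a : ℝ}
    {b : Fin (n + 1) → ℝ →₀ ℝ} (hb : ∀ i, b i ∈ Finsupp.supported ℝ ℝ (Ici 0))
    {c : Fin (n + 1) → ℝ → ℝ} (hc0 : c 0 = call s₀) (hc : ∀ i, IsCallPrice (c i))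
    (hord : ∀ i : Fin n, ConcaveOrderLE (c i.succ) (c i.castSucc))
    (hpay : ∀ ω ∈ Omega n s₀, 0 ≤ a + ∑ i, weightedSum (b i) (call (ω i)) + D.gains ω) :
    0 ≤ a + ∑ i, weightedSum (b i) (c i) := by
  induction n generalizing a with
  | zero => simpa [Dyn.gains, hc0] using hpay _ (const_mem_Omega hs₀)
  | succ n ih =>
    obtain ⟨a', b', hb', hprice, hpay'⟩ := exists_one_period_reduction hs₀ hD hb hpay
    exact (ih hD.init hb' (c := fun i ↦ c i.castSucc) hc0 (fun i ↦ hc _)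
      (fun i ↦ hord i.castSucc) hpay').trans (hprice c (hc _) (hord (Fin.last n)))

end BackwardInduction

section Sufficiency

variable {n : ℕ} {s₀ : ℝ} {c : Fin n → ℝ → ℝ}

/-- The positions of `X` in the calls of maturity `i`, indexed by strike. -/
def Static.strikeWeights (X : Static n) (i : Fin n) : ℝ →₀ ℝ :=
  ∑ l, if X.idx l = i then Finsupp.single (X.strike l) (X.coeff l) else 0

lemma Static.strikeWeights_mem_supported (X : Static n) (i : Fin n) :
    X.strikeWeights i ∈ Finsupp.supported ℝ ℝ (Ici 0) := by
  refine sum_mem fun l _ ↦ ?_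
  split_ifs
  · exact Finsupp.single_mem_supported ℝ _ (X.strike_nonneg l)
  · exact zero_mem _

lemma Static.sum_weightedSum_strikeWeights (X : Static n) (φ : Fin n → ℝ → ℝ) :
    ∑ i, weightedSum (X.strikeWeights i) (φ i) = ∑ l, X.coeff l * φ (X.idx l) (X.strike l) := by
  simp only [Static.strikeWeights, map_sum, LinearMap.sum_apply]
  rw [Finset.sum_comm]
  refine Finset.sum_congr rfl fun l _ ↦ ?_
  rw [Finset.sum_eq_single (X.idx l) (fun i _ hi ↦ by simp [hi.symm]) (by simp), if_pos rfl,
    weightedSum_single]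

lemma Static.price_eq_sum_weightedSum (X : Static n) (c : Fin n → ℝ → ℝ) :
    X.price c = X.const + ∑ i, weightedSum (X.strikeWeights i) (c i) :=
  congrArg _ (X.sum_weightedSum_strikeWeights c).symm

lemma Static.callPayoff_eq_price (X : Static n) (ω : Path n) :
    X.callPayoff ω = X.price fun i ↦ call (ω i.succ) := rfl

lemma isCallPrice_of_cond (h1 : CondC1 c) (h2 : CondC2 s₀ c) (i : Fin n) : IsCallPrice (c i) :=
  ⟨(h1 i).1, (h1 i).2.1, (h1 i).2.2, h2.2.2.2 i⟩

lemma IsCallPrice.concaveOrderLE_call {c : ℝ → ℝ} (hc : IsCallPrice c) (h : c 0 ≤ s₀) :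
    ConcaveOrderLE c (call s₀) := by
  have hs₀ : 0 ≤ s₀ := (hc.nonneg 0 le_rfl).trans h
  refine ⟨by rwa [call_zero_right hs₀], fun x hx ↦ ?_⟩
  have hcx : c 0 - x ≤ c x := by
    rcases hx.eq_or_lt with rfl | hx
    · rw [sub_zero]
    · exact hc.sub_le x hx
  rw [call_zero_right hs₀]
  rcases le_total x s₀ with h' | h'
  · rw [call_of_le h']
    linarith
  · rw [call_of_ge h']
    linarith [hc.nonneg x hx]

lemma not_robustArbitrage_of_cond (hs₀ : 0 ≤ s₀) (h1 : CondC1 c) (h2 : CondC2 s₀ c)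
    (h4 : CondC4 c) : ¬ RobustArbitrage Static.callPayoff c (Omega n s₀) := by
  rintro ⟨X, D, hD, hprice, hpay⟩
  have hvalue := value_nonneg_of_superhedge hs₀ hD (a := X.const)
    (b := Fin.cons 0 X.strikeWeights) (c := Fin.cons (call s₀) c)
    (Fin.cases (zero_mem _) X.strikeWeights_mem_supported) rfl
    (Fin.cases (isCallPrice_call s₀) (isCallPrice_of_cond h1 h2)) ?_ fun ω hω ↦ ?_
  · simp only [Fin.sum_univ_succ, Fin.cons_zero, Fin.cons_succ, map_zero, LinearMap.zero_apply,
      zero_add, ← X.price_eq_sum_weightedSum] at hvalue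
    exact hprice.not_ge hvalue
  · intro i
    rcases n with - | n
    · exact i.elim0
    cases i using Fin.cases with
    | zero => exact (isCallPrice_of_cond h1 h2 0).concaveOrderLE_call (h2.1 0)
    | succ j =>
      exact ⟨h2.2.1 _ _ j.castSucc_le_succ, fun x hx ↦ h4 x hx _ _ j.castSucc_le_succ⟩
  · simpa only [Fin.sum_univ_succ, Fin.cons_zero, Fin.cons_succ, map_zero, LinearMap.zero_apply,
      zero_add, ← X.price_eq_sum_weightedSum fun i ↦ call (ω i.succ), X.callPayoff_eq_price]
      using hpay ω hω

end Sufficiency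

section Necessity

variable {n : ℕ} {s₀ : ℝ}

instance : Zero (Dyn n) where
  zero := { pos := 0, meas := fun _ ↦ measurable_zero, bdd := fun _ ↦ ⟨0, by simp⟩ }

lemma Dyn.nonneg_zero : (0 : Dyn n).Nonneg := fun _ _ ↦ le_rfl

@[simp]
lemma Dyn.gains_zero (ω : Path n) : (0 : Dyn n).gains ω = 0 :=
  Finset.sum_eq_zero fun _ _ ↦ zero_mul _

/-- The strategy that holds one unit of the asset from time `j` to time `j + 1`, provided that
`(S₁, …, S_j) ∈ B`. -/
def Dyn.buyIf (j : Fin n) (B : Set (Fin j → ℝ)) (hB : MeasurableSet B) : Dyn n where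
  pos := Pi.single j (B.indicator 1)
  meas i := by
    rcases eq_or_ne i j with rfl | hij
    · simpa using measurable_one.indicator hB
    · simpa [hij] using measurable_zero
  bdd i := by
    refine ⟨1, fun x ↦ ?_⟩
    rcases eq_or_ne i j with rfl | hij
    · by_cases hx : x ∈ B <;> simp [hx]
    · simp [hij]

variable {j : Fin n} {B : Set (Fin j → ℝ)} {hB : MeasurableSet B}

lemma Dyn.nonneg_buyIf : (Dyn.buyIf j B hB).Nonneg := by
  have hpos : (0 : (i : Fin n) → (Fin i → ℝ) → ℝ) ≤ Pi.single j (B.indicator 1) :=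
    Pi.single_nonneg.2 (indicator_nonneg fun _ _ ↦ zero_le_one)
  exact hpos

lemma Dyn.gains_buyIf (ω : Path n) :
    (Dyn.buyIf j B hB).gains ω = B.indicator 1 (restr j ω) * (ω j.succ - ω j.castSucc) := by
  unfold Dyn.gains
  rw [Finset.sum_eq_single j (fun i _ hij ↦ by simp [Dyn.buyIf, hij]) (by simp)]
  simp [Dyn.buyIf]

lemma exists_static_price_eq (a : ℝ) {b : Fin n → ℝ →₀ ℝ}
    (hb : ∀ i, b i ∈ Finsupp.supported ℝ ℝ (Ici 0)) :
    ∃ X : Static n, ∀ c, X.price c = a + ∑ i, weightedSum (b i) (c i) := by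
  set T := Finset.univ.sigma fun i ↦ (b i).support
  refine ⟨⟨a, T.card, fun l ↦ b (T.equivFin.symm l).1.1 (T.equivFin.symm l).1.2,
    fun l ↦ (T.equivFin.symm l).1.1, fun l ↦ (T.equivFin.symm l).1.2,
    fun l ↦ hb _ (Finset.mem_sigma.1 (T.equivFin.symm l).2).2⟩, fun c ↦ congrArg (a + ·) ?_⟩
  simp only [weightedSum_apply]
  rw [T.equivFin.symm.sum_comp fun t ↦ b t.1.1 t.1.2 * c t.1.1 t.1.2,
    Finset.sum_coe_sort T fun t ↦ b t.1 t.2 * c t.1 t.2, Finset.sum_sigma]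

variable {c : Fin n → ℝ → ℝ}

lemma value_nonneg_of_not_robustArbitrage
    (h : ¬ RobustArbitrage Static.callPayoff c (Omega n s₀)) {D : Dyn n} (hD : D.Nonneg) {a : ℝ}
    {b : Fin n → ℝ →₀ ℝ} (hb : ∀ i, b i ∈ Finsupp.supported ℝ ℝ (Ici 0))
    (hpay : ∀ ω ∈ Omega n s₀, 0 ≤ a + ∑ i, weightedSum (b i) (call (ω i.succ)) + D.gains ω) :
    0 ≤ a + ∑ i, weightedSum (b i) (c i) := by
  obtain ⟨X, hX⟩ := exists_static_price_eq a hb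
  rw [← hX]
  refine not_lt.1 fun hlt ↦ h ⟨X, D, hD, hlt, fun ω hω ↦ ?_⟩
  rw [X.callPayoff_eq_price, hX]
  exact hpay ω hω

lemma static_value_nonneg_of_not_robustArbitrage
    (h : ¬ RobustArbitrage Static.callPayoff c (Omega n s₀)) (i : Fin n) {a : ℝ} {w : ℝ →₀ ℝ}
    (hw : w ∈ Finsupp.supported ℝ ℝ (Ici 0)) (hpay : ∀ s, 0 ≤ a + weightedSum w (call s)) :
    0 ≤ a + weightedSum w (c i) := by
  rw [← sum_weightedSum_piSingle i w c]
  refine value_nonneg_of_not_robustArbitrage h Dyn.nonneg_zero (piSingle_mem_supported hw i)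
    fun ω _ ↦ ?_
  rw [sum_weightedSum_piSingle i w fun i ↦ call (ω i.succ), Dyn.gains_zero, add_zero]
  exact hpay _

/-- Each requirement is a linear inequality between finitely many prices which holds for the payoff
functions `call s`, so that its violation is an arbitrage. -/
lemma isCallPrice_of_not_robustArbitrage
    (h : ¬ RobustArbitrage Static.callPayoff c (Omega n s₀)) (i : Fin n) : IsCallPrice (c i) where
  nonneg K hK := by
    simpa using static_value_nonneg_of_not_robustArbitrage h i (a := 0)
      (Finsupp.single_mem_supported ℝ 1 hK) fun s ↦ by simpa using call_nonneg s K
  convexOn := by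
    refine ⟨convex_Ici 0, fun x hx y hy α β hα hβ hαβ ↦ ?_⟩
    have hvalue := static_value_nonneg_of_not_robustArbitrage h i (a := 0)
      (sub_mem (add_mem (Finsupp.single_mem_supported ℝ α hx) (Finsupp.single_mem_supported ℝ β hy))
        (Finsupp.single_mem_supported ℝ 1 (convex_Ici 0 hx hy hα hβ hαβ))) fun s ↦ by
        simpa using (isCallPrice_call s).convexOn.2 hx hy hα hβ hαβ
    simpa using hvalue
  antitoneOn x hx y hy hxy := by
    have hvalue := static_value_nonneg_of_not_robustArbitrage h i (a := 0)
      (sub_mem (Finsupp.single_mem_supported ℝ 1 hx) (Finsupp.single_mem_supported ℝ 1 hy))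
      fun s ↦ by simpa using antitone_call s hxy
    simpa using hvalue
  sub_le K hK := by
    have hvalue := static_value_nonneg_of_not_robustArbitrage h i (a := K)
      (sub_mem (Finsupp.single_mem_supported ℝ 1 hK.le)
        (Finsupp.single_mem_supported ℝ 1 self_mem_Ici)) fun s ↦ by
        simp only [map_sub, LinearMap.sub_apply, weightedSum_single]
        linarith [(isCallPrice_call s).sub_le K hK]
    simp only [map_sub, LinearMap.sub_apply, weightedSum_single] at hvalue
    linarith

lemma price_zero_le_of_not_robustArbitrage {c : Fin (n + 1) → ℝ → ℝ}
    (h : ¬ RobustArbitrage Static.callPayoff c (Omega (n + 1) s₀)) : c 0 0 ≤ s₀ := by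
  have hvalue := value_nonneg_of_not_robustArbitrage h
    (Dyn.nonneg_buyIf (j := 0) (hB := MeasurableSet.univ)) (a := s₀)
    (piSingle_mem_supported (Finsupp.single_mem_supported ℝ (-1) self_mem_Ici) 0) fun ω hω ↦ by
      rw [sum_weightedSum_piSingle _ _ fun i ↦ call (ω i.succ), Dyn.gains_buyIf, weightedSum_single,
        call_zero_right (hω.2 _), Fin.castSucc_zero, hω.1, indicator_univ, Pi.one_apply]
      linarith
  rw [sum_weightedSum_piSingle, weightedSum_single] at hvalue
  linarith

lemma two_maturity_value_nonneg_of_not_robustArbitrage {c : Fin (n + 1) → ℝ → ℝ}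
    (h : ¬ RobustArbitrage Static.callPayoff c (Omega (n + 1) s₀)) (j : Fin n) {B : Set ℝ}
    (hB : MeasurableSet B) {w w' : ℝ →₀ ℝ} (hw : w ∈ Finsupp.supported ℝ ℝ (Ici 0))
    (hw' : w' ∈ Finsupp.supported ℝ ℝ (Ici 0))
    (hpay : ∀ s s', 0 ≤ s → 0 ≤ s' →
      0 ≤ weightedSum w (call s) + weightedSum w' (call s') + B.indicator 1 s * (s' - s)) :
    0 ≤ weightedSum w (c j.castSucc) + weightedSum w' (c j.succ) := by
  have hB' : MeasurableSet {v : Fin j.succ → ℝ | v (Fin.last j) ∈ B} := measurable_pi_apply _ hB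
  have hvalue := value_nonneg_of_not_robustArbitrage h (Dyn.nonneg_buyIf (hB := hB')) (a := 0)
    (fun i ↦ add_mem (piSingle_mem_supported hw j.castSucc i) (piSingle_mem_supported hw' j.succ i))
    fun ω hω ↦ by
      simp only [map_add, LinearMap.add_apply, Finset.sum_add_distrib]
      rw [sum_weightedSum_piSingle _ _ fun i ↦ call (ω i.succ),
        sum_weightedSum_piSingle _ _ fun i ↦ call (ω i.succ), Dyn.gains_buyIf, zero_add]
      exact hpay _ _ (hω.2 _) (hω.2 _)
  simpa only [map_add, LinearMap.add_apply, Finset.sum_add_distrib, sum_weightedSum_piSingle,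
    zero_add] using hvalue

/-- Holding one unit while `S_{j+1} ≤ x` superhedges the exchange of `min S_{j+1} x` for
`min S_{j+2} x`. -/
lemma concaveOrderLE_of_not_robustArbitrage {c : Fin (n + 1) → ℝ → ℝ}
    (h : ¬ RobustArbitrage Static.callPayoff c (Omega (n + 1) s₀)) (j : Fin n) :
    ConcaveOrderLE (c j.succ) (c j.castSucc) := by
  have hzero : ∀ r, Finsupp.single 0 r ∈ Finsupp.supported ℝ ℝ (Ici (0 : ℝ)) := fun r ↦
    Finsupp.single_mem_supported ℝ r self_mem_Ici
  constructor
  · have hvalue := two_maturity_value_nonneg_of_not_robustArbitrage h j MeasurableSet.univ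
      (hzero 1) (hzero (-1)) fun s s' hs hs' ↦ by
        rw [weightedSum_single, weightedSum_single, call_zero_right hs, call_zero_right hs',
          indicator_univ, Pi.one_apply]
        linarith
    simpa using hvalue
  · intro x hx
    have hsx : ∀ r, Finsupp.single x r ∈ Finsupp.supported ℝ ℝ (Ici (0 : ℝ)) := fun r ↦
      Finsupp.single_mem_supported ℝ r hx
    have hvalue := two_maturity_value_nonneg_of_not_robustArbitrage h j (measurableSet_Iic (a := x))
      (sub_mem (hzero 1) (hsx 1)) (sub_mem (hsx 1) (hzero 1)) fun s s' hs hs' ↦ by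
        simp only [map_sub, LinearMap.sub_apply, weightedSum_single, call_zero_right hs,
          call_zero_right hs']
        rcases le_or_gt s x with hsx | hxs
        · rw [indicator_of_mem (mem_Iic.2 hsx), Pi.one_apply, call_of_ge hsx]
          linarith [call_nonneg s' x]
        · rw [indicator_of_notMem (notMem_Iic.2 hxs), call_of_le hxs.le]
          linarith [sub_le_call s' x]
    simp only [map_sub, LinearMap.sub_apply, weightedSum_single] at hvalue
    linarith

lemma cond_of_not_robustArbitrage (h : ¬ RobustArbitrage Static.callPayoff c (Omega n s₀)) :
    CondC1 c ∧ CondC2 s₀ c ∧ CondC4 c := by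
  rcases n with - | n
  · simp [CondC1, CondC2, CondC4]
  have hprice := isCallPrice_of_not_robustArbitrage h
  have hord := concaveOrderLE_of_not_robustArbitrage h
  have hzero : Antitone fun i ↦ c i 0 := Fin.antitone_iff_succ_le.2 fun j ↦ (hord j).1
  have hdiff : ∀ x, 0 ≤ x → Antitone fun i ↦ c i 0 - c i x := fun x hx ↦
    Fin.antitone_iff_succ_le.2 fun j ↦ (hord j).2 x hx
  exact ⟨fun i ↦ ⟨(hprice i).nonneg, (hprice i).convexOn, (hprice i).antitoneOn⟩,
    ⟨fun i ↦ (hzero (Fin.zero_le i)).trans (price_zero_le_of_not_robustArbitrage h),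
      fun _ _ hij ↦ hzero hij, fun i ↦ (hprice i).nonneg 0 le_rfl, fun i ↦ (hprice i).sub_le⟩,
    fun x hx _ _ hij ↦ hdiff x hx hij⟩

end Necessity

section Calibrated

variable {n : ℕ} {Q : Measure (Path n)}

lemma eexp_of_nonneg {f : Path n → ℝ} (hf : 0 ≤ f) :
    eexp Q f = ((∫⁻ ω, ENNReal.ofReal (f ω) ∂Q : ℝ≥0∞) : EReal) := by
  simp [eexp, ENNReal.ofReal_of_nonpos (neg_nonpos.2 (hf _))]

lemma eexp_of_nonpos {f : Path n → ℝ} (hf : f ≤ 0) :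
    eexp Q f = -((∫⁻ ω, ENNReal.ofReal (-f ω) ∂Q : ℝ≥0∞) : EReal) := by
  simp [eexp, ENNReal.ofReal_of_nonpos (hf _)]

variable {c : Fin n → ℝ → ℝ} {P : Set (Path n)}

/-- The calibration inequality for a long and for a short position in the call. -/
lemma Calibrated.lintegral_call (hQ : Calibrated Static.callPayoff c P Q) (i : Fin n) {K : ℝ}
    (hK : 0 ≤ K) : ((∫⁻ ω, ENNReal.ofReal (call (ω i.succ) K) ∂Q : ℝ≥0∞) : EReal) = c i K := by
  have hcal : ∀ r, eexp Q (fun ω ↦ r * call (ω i.succ) K) ≤ ((r * c i K : ℝ) : EReal) := fun r ↦ by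
    simpa [Static.callPayoff, Static.price, call] using
      hQ.2.2 ⟨0, 1, fun _ ↦ r, fun _ ↦ i, fun _ ↦ K, fun _ ↦ hK⟩ 0 Dyn.nonneg_zero
  have hlong := hcal 1
  have hshort := hcal (-1)
  rw [eexp_of_nonneg fun ω ↦ by simpa using call_nonneg _ K] at hlong
  rw [eexp_of_nonpos fun ω ↦ by simpa using call_nonneg _ K] at hshort
  simp only [one_mul, neg_mul, neg_neg, EReal.coe_neg, EReal.neg_le_neg_iff] at hlong hshort
  exact hlong.antisymm hshort

lemma tendsto_lintegral_call_atTop {E : Type*} [MeasurableSpace E] {μ : Measure E} {X : E → ℝ}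
    (hX : Measurable X) (h0 : ∫⁻ ω, ENNReal.ofReal (call (X ω) 0) ∂μ ≠ ⊤) :
    Tendsto (fun K ↦ ∫⁻ ω, ENNReal.ofReal (call (X ω) K) ∂μ) atTop (𝓝 0) := by
  rw [← lintegral_zero (μ := μ)]
  refine tendsto_lintegral_filter_of_dominated_convergence _
    (Eventually.of_forall fun K ↦ ?_) ?_ h0 (ae_of_all _ fun ω ↦ ?_)
  · unfold call
    fun_prop
  · filter_upwards [eventually_ge_atTop 0] with K hK
    exact ae_of_all _ fun ω ↦ ENNReal.ofReal_le_ofReal (antitone_call _ hK)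
  · refine tendsto_const_nhds.congr' ?_
    filter_upwards [eventually_ge_atTop (X ω)] with K hK
    rw [call_of_ge hK, ENNReal.ofReal_zero]

lemma Calibrated.condC3 (hQ : Calibrated Static.callPayoff c P Q) : CondC3 c := by
  intro i
  have h0 : ∫⁻ ω, ENNReal.ofReal (call (ω i.succ) 0) ∂Q ≠ ⊤ := fun htop ↦ by
    have hprice := hQ.lintegral_call i le_rfl
    simp [htop] at hprice
  have hlim := tendsto_lintegral_call_atTop (measurable_pi_apply i.succ) h0
  refine ((ENNReal.tendsto_toReal ENNReal.zero_ne_top).comp hlim).congr' ?_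
  filter_upwards [eventually_ge_atTop 0] with K hK
  rw [Function.comp_apply, ← EReal.toReal_coe_ennreal, hQ.lintegral_call i hK, EReal.toReal_coe]

end Calibrated

/-- Proposition 3.2: with `𝔓 = Ω` and traded calls,
Condition C (i),(ii),(iv) is necessary and sufficient for the absence of a robust
uniformly strong arbitrage; if moreover (iii) fails, there is no robust uniformly
strong arbitrage but no market calibrated model exists. -/
theorem robust_arbitrage_characterisation_calls
    {n : ℕ} (hn : 1 ≤ n) {s₀ : ℝ} (hs₀ : 0 < s₀) (c : Fin n → ℝ → ℝ) :
    ((CondC1 c ∧ CondC2 s₀ c ∧ CondC4 c) ↔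
      ¬ RobustArbitrage Static.callPayoff c (Omega n s₀)) ∧
    ((CondC1 c ∧ CondC2 s₀ c ∧ CondC4 c ∧ ¬ CondC3 c) →
      (¬ RobustArbitrage Static.callPayoff c (Omega n s₀) ∧
        ¬ ∃ Q : Measure (Path n), Calibrated Static.callPayoff c (Omega n s₀) Q)) := by
  refine ⟨⟨fun ⟨h1, h2, h4⟩ ↦ not_robustArbitrage_of_cond hs₀.le h1 h2 h4,
    cond_of_not_robustArbitrage⟩, fun ⟨h1, h2, h4, h3⟩ ↦ ?_⟩
  exact ⟨not_robustArbitrage_of_cond hs₀.le h1 h2 h4, fun ⟨_, hQ⟩ ↦ h3 hQ.condC3⟩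

end RobustFin
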